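/- Let 𝒫 = (P, μ, σ) be a 2-dimensional system. Then every maximizer q ∈ ℰ^{exp,1}(P) of the toric non-archimedean μ-entropy 𝜇̌_NA — i.e. every q ∈ ℰ^{exp,1}(P) with 𝜇̌_NA(q) ≥ 𝜇̌_NA(q') for all q' ∈ ℰ^{exp,1}(P) — is bounded and continuous on P. -/

import Mathlib

open MeasureTheory Filter Topology
open scoped ENNReal NNReal

noncomputable section

abbrev Euc (n : ℕ) := EuclideanSpace ℝ (Fin n)

/-- A `[0,∞]`-valued function on a set `K ⊆ ℝⁿ` is convex if
`u((1−t)x+ty) ≤ (1−t)u(x)+t·u(y)` in `[0,∞]` for all `x, y ∈ K` and `t ∈ [0,1]`. -/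
def ConvexFnOn {n : ℕ} (K : Set (Euc n)) (u : Euc n → ℝ≥0∞) : Prop :=
  ∀ ⦃x⦄, x ∈ K → ∀ ⦃y⦄, y ∈ K → ∀ ⦃t : ℝ⦄, 0 ≤ t → t ≤ 1 →
    u ((1 - t) • x + t • y) ≤ ENNReal.ofReal (1 - t) * u x + ENNReal.ofReal t * u y

/-- A polytope: a compact set with nonempty interior which is a finite
intersection of closed half-spaces (cut out by nonzero affine functions). -/
def IsPolytope {n : ℕ} (P : Set (Euc n)) : Prop :=
  IsCompact P ∧ (interior P).Nonempty ∧
    ∃ (m : ℕ) (L : Fin m → (Euc n →ᵃ[ℝ] ℝ)),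
      (∀ k, L k ≠ 0) ∧ P = ⋂ k, {x | 0 ≤ L k x}

/-- `F` is a face of `P`: the intersection of `P` with the zero locus of a
nonzero affine function that is nonnegative on `P`. -/
def IsFaceOf {n : ℕ} (P F : Set (Euc n)) : Prop :=
  ∃ ℓ : Euc n →ᵃ[ℝ] ℝ, ℓ ≠ 0 ∧ (∀ y ∈ P, 0 ≤ ℓ y) ∧ F = {y ∈ P | ℓ y = 0}

/-- A facet: a face spanning an affine subspace of dimension `n − 1`. -/
def IsFacetOf {n : ℕ} (P F : Set (Euc n)) : Prop :=
  IsFaceOf P F ∧ Module.finrank ℝ (vectorSpan ℝ F) + 1 = n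

/-- A simple polytope: every vertex lies on exactly `n` facets. -/
def IsSimplePolytope {n : ℕ} (P : Set (Euc n)) : Prop :=
  IsPolytope P ∧ ∀ v : Euc n, IsFaceOf P {v} →
    {F : Set (Euc n) | IsFacetOf P F ∧ v ∈ F}.ncard = n

/-- An `n`-dimensional system `𝒫 = (P, μ, σ)`: a simple polytope `P ⊆ ℝⁿ`, a flat
measure `μ` on `P` (a positive constant multiple of Lebesgue measure restricted
to `P`), and a flat measure `σ` on `∂P` (supported on the boundary and, on each
facet, a positive constant multiple of `(n−1)`-dimensional Hausdorff measure). -/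
structure NSystem (n : ℕ) where
  P : Set (Euc n)
  μ : Measure (Euc n)
  σ : Measure (Euc n)
  simple : IsSimplePolytope P
  flat : ∃ c : ℝ, 0 < c ∧ μ = ENNReal.ofReal c • volume.restrict P
  bdry_supp : σ (frontier P)ᶜ = 0
  flat_bdry : ∀ F : Set (Euc n), IsFacetOf P F →
    ∃ c : ℝ, 0 < c ∧ σ.restrict F =
      ENNReal.ofReal c • (Measure.hausdorffMeasure ((n : ℝ) - 1)).restrict F

/-- A `(−∞,∞]`-valued function on `P` is convex if
`q((1−t)x+ty) ≤ (1−t)q(x)+t·q(y)` for all `x, y ∈ P` and `t ∈ [0,1]`. -/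
def EConvexOn {n : ℕ} (P : Set (Euc n)) (q : Euc n → EReal) : Prop :=
  ∀ ⦃x⦄, x ∈ P → ∀ ⦃y⦄, y ∈ P → ∀ ⦃t : ℝ⦄, 0 ≤ t → t ≤ 1 →
    q ((1 - t) • x + t • y) ≤ ((1 - t : ℝ) : EReal) * q x + ((t : ℝ) : EReal) * q y

/-- The exponential `[−∞,∞] → [0,∞]`. -/
def expE (x : EReal) : ℝ≥0∞ :=
  if x = ⊤ then ⊤ else if x = ⊥ then 0 else ENNReal.ofReal (Real.exp x.toReal)

/-- `ℰ^{exp,1}(P)`: lower semi-continuous convex `q : P → (−∞,∞]` with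
`∫_P e^q dμ < ∞`. -/
def EExpOne {n : ℕ} (S : NSystem n) : Set (Euc n → EReal) :=
  {q | LowerSemicontinuousOn q S.P ∧ (∀ x ∈ S.P, q x ≠ ⊥) ∧ EConvexOn S.P q ∧
    (∫⁻ x in S.P, expE (q x) ∂S.μ) < ⊤}

/-- The toric non-archimedean μ-entropy
`𝜇̌_NA(q) = −2π (∫_{∂P} e^q dσ) / (∫_P e^q dμ)`. -/
def muNA {n : ℕ} (S : NSystem n) (q : Euc n → EReal) : EReal :=
  ((-(2 * Real.pi) : ℝ) : EReal) *
    (((∫⁻ x in frontier S.P, expE (q x) ∂S.σ) / (∫⁻ x in S.P, expE (q x) ∂S.μ)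
        : ℝ≥0∞) : EReal)

lemma expE_top : expE ⊤ = ⊤ := by simp [expE]

lemma expE_coe (c : ℝ) : expE (c : EReal) = ENNReal.ofReal (Real.exp c) := by
  simp [expE]

lemma expE_mono : Monotone expE := by
  intro a b hab
  induction a using EReal.rec with
  | bot => simp [expE]
  | top => simp at hab; simp [hab]
  | coe a =>
    induction b using EReal.rec with
    | bot => simp at hab
    | top => simp [expE_top]
    | coe b =>
      rw [expE_coe, expE_coe]
      exact ENNReal.ofReal_le_ofReal (Real.exp_le_exp.2 (by exact_mod_cast hab))

lemma expE_lt {a b : EReal} (h : a < b) : expE a < expE b := by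
  induction a using EReal.rec with
  | bot =>
    induction b using EReal.rec with
    | bot => simp at h
    | top => simp [expE]
    | coe b => simp [expE, Real.exp_pos]
  | top => simp at h
  | coe a =>
    induction b using EReal.rec with
    | bot => simp at h
    | top => simp [expE_top, expE_coe]
    | coe b =>
      rw [expE_coe, expE_coe]
      exact (ENNReal.ofReal_lt_ofReal_iff (Real.exp_pos _)).2
        (Real.exp_lt_exp.2 (by exact_mod_cast h))

lemma expE_pos {a : EReal} (h : a ≠ ⊥) : 0 < expE a := by
  have := expE_lt (bot_lt_iff_ne_bot.2 h)
  exact lt_of_le_of_lt bot_le this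

structure GoodQ (P : Set (Euc 2)) (Q : Euc 2 → EReal) : Prop where
  lsc : LowerSemicontinuous Q
  nb : ∀ x, Q x ≠ ⊥
  off : ∀ x, x ∉ P → Q x = ⊤
  epi : ∀ x y : Euc 2, ∀ a b t : ℝ, 0 ≤ t → t ≤ 1 → Q x ≤ (a : EReal) → Q y ≤ (b : EReal) →
    Q ((1 - t) • x + t • y) ≤ (((1 - t) * a + t * b : ℝ) : EReal)

def qreg (Q : Euc 2 → EReal) (w : Euc 2) (R N : ℝ) (x : Euc 2) : EReal :=
  ⨅ t ∈ Set.Icc (0 : ℝ) R, (Q (x + t • w) + ((N * t : ℝ) : EReal))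

lemma GoodQ.joint {P Q} (h : GoodQ P Q) (w : Euc 2) (N : ℝ) :
    LowerSemicontinuous (fun p : Euc 2 × ℝ => Q (p.1 + p.2 • w) + ((N * p.2 : ℝ) : EReal)) := by
  apply LowerSemicontinuous.add'
  · exact h.lsc.comp (g := fun p : Euc 2 × ℝ => p.1 + p.2 • w) (by fun_prop)
  · apply Continuous.lowerSemicontinuous
    exact continuous_coe_real_ereal.comp (by fun_prop)
  · intro x
    exact EReal.continuousAt_add (Or.inr (EReal.coe_ne_bot _)) (Or.inr (EReal.coe_ne_top _))

lemma GoodQ.attain {P Q} (h : GoodQ P Q) (w : Euc 2) {R : ℝ} (hR : 0 ≤ R) (N : ℝ) (x : Euc 2) :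
    ∃ t ∈ Set.Icc (0 : ℝ) R, qreg Q w R N x = Q (x + t • w) + ((N * t : ℝ) : EReal) := by
  have hl : LowerSemicontinuous (fun t : ℝ => Q (x + t • w) + ((N * t : ℝ) : EReal)) :=
    (h.joint w N).comp (g := fun t : ℝ => (x, t)) (by fun_prop)
  obtain ⟨t, ht, hm⟩ := LowerSemicontinuousOn.exists_isMinOn (s := Set.Icc (0 : ℝ) R)
    ⟨0, by simp [hR]⟩ isCompact_Icc (hl.lowerSemicontinuousOn _)
  refine ⟨t, ht, le_antisymm (iInf₂_le t ht) (le_iInf₂ fun s hs => hm hs)⟩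

lemma GoodQ.qreg_lsc {P Q} (h : GoodQ P Q) (w : Euc 2) {R : ℝ} (hR : 0 ≤ R) (N : ℝ) :
    LowerSemicontinuous (qreg Q w R N) := by
  intro x c hc
  obtain ⟨c', h1, h2⟩ := exists_between hc
  have := isCompact_Icc.eventually_forall_of_forall_eventually (x₀ := x) (K := Set.Icc (0:ℝ) R)
    (P := fun x t => c' < Q (x + t • w) + ((N * t : ℝ) : EReal))
    (fun t ht => h.joint w N (x, t) c' (lt_of_lt_of_le h2 (iInf₂_le t ht)))
  filter_upwards [this] with y hy
  exact lt_of_lt_of_le h1 (le_iInf₂ fun t ht => (hy t ht).le)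

lemma GoodQ.qreg_nb {P Q} (h : GoodQ P Q) (w : Euc 2) {R : ℝ} (hR : 0 ≤ R) (N : ℝ) (x) :
    qreg Q w R N x ≠ ⊥ := by
  obtain ⟨t, ht, e⟩ := h.attain w hR N x
  rw [e]
  have := h.nb (x + t • w)
  rw [Ne, EReal.add_eq_bot_iff, not_or]
  exact ⟨this, EReal.coe_ne_bot _⟩

lemma qreg_le {Q : Euc 2 → EReal} (w : Euc 2) {R : ℝ} (hR : 0 ≤ R) (N : ℝ) (x) :
    qreg Q w R N x ≤ Q x := by
  refine (iInf₂_le (0 : ℝ) (by simp [hR])).trans ?_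
  simp

lemma add_real_le {a : EReal} {r c : ℝ} :
    a + (r : EReal) ≤ (c : EReal) ↔ a ≤ ((c - r : ℝ) : EReal) := by
  induction a using EReal.rec with
  | bot => simp
  | top =>
    rw [EReal.top_add_coe]
    exact ⟨fun h => absurd h (by rw [top_le_iff]; exact EReal.coe_ne_top _),
      fun h => absurd h (by rw [top_le_iff]; exact EReal.coe_ne_top _)⟩
  | coe a => norm_cast; constructor <;> intro h <;> linarith

lemma GoodQ.qreg_epi {P Q} (h : GoodQ P Q) (w : Euc 2) {R : ℝ} (hR : 0 ≤ R) (N : ℝ) :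
    ∀ x y : Euc 2, ∀ a b t : ℝ, 0 ≤ t → t ≤ 1 → qreg Q w R N x ≤ (a : EReal) →
    qreg Q w R N y ≤ (b : EReal) →
    qreg Q w R N ((1 - t) • x + t • y) ≤ (((1 - t) * a + t * b : ℝ) : EReal) := by
  intro x y a b t h0 h1 hx hy
  obtain ⟨s, hs, e⟩ := h.attain w hR N x
  obtain ⟨s', hs', e'⟩ := h.attain w hR N y
  rw [e, add_real_le] at hx
  rw [e', add_real_le] at hy
  have := h.epi _ _ _ _ t h0 h1 hx hy
  have hmem : (1 - t) * s + t * s' ∈ Set.Icc (0:ℝ) R := by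
    obtain ⟨u1, u2⟩ := hs
    obtain ⟨v1, v2⟩ := hs'
    constructor
    · have : 0 ≤ 1 - t := by linarith
      positivity
    · nlinarith
  refine (iInf₂_le _ hmem).trans ?_
  rw [add_real_le]
  convert this using 2
  · module
  · ring

lemma econv_of_epi {P : Set (Euc 2)} {Q : Euc 2 → EReal} (nb : ∀ x ∈ P, Q x ≠ ⊥)
    (epi : ∀ x ∈ P, ∀ y ∈ P, ∀ a b t : ℝ, 0 ≤ t → t ≤ 1 → Q x ≤ (a : EReal) → Q y ≤ (b : EReal) →
    Q ((1 - t) • x + t • y) ≤ (((1 - t) * a + t * b : ℝ) : EReal)) : EConvexOn P Q := by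
  intro x hx y hy t h0 h1
  rcases h0.eq_or_lt with rfl | h0'
  · simp
  rcases h1.eq_or_lt with rfl | h1'
  · simp
  have k := epi x hx y hy
  have n1 := nb x hx
  have n2 := nb y hy
  have ht : (0:ℝ) < 1 - t := by linarith
  generalize Q x = A at *
  generalize Q y = B at *
  induction A using EReal.rec with
  | bot => simp at n1
  | top =>
    rw [EReal.coe_mul_top_of_pos ht, EReal.top_add_of_ne_bot]
    · simp
    · induction B using EReal.rec with
      | bot => simp at n2
      | top => rw [EReal.coe_mul_top_of_pos h0']; simp
      | coe b => rw [← EReal.coe_mul]; exact EReal.coe_ne_bot _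
  | coe a =>
    induction B using EReal.rec with
    | bot => simp at n2
    | top => rw [EReal.coe_mul_top_of_pos h0', ← EReal.coe_mul, EReal.coe_add_top]; exact le_top
    | coe b => exact_mod_cast k a b t h0 h1 le_rfl le_rfl

lemma epi_of_econv {P : Set (Euc 2)} {q : Euc 2 → EReal} (hc : EConvexOn P q) :
    ∀ x ∈ P, ∀ y ∈ P, ∀ a b t : ℝ, 0 ≤ t → t ≤ 1 → q x ≤ (a : EReal) → q y ≤ (b : EReal) →
    q ((1 - t) • x + t • y) ≤ (((1 - t) * a + t * b : ℝ) : EReal) := by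
  intro x hx y hy a b t h0 h1 ha hb
  refine (hc hx hy h0 h1).trans ?_
  push_cast
  have h1' : (0:EReal) ≤ ((1 - t : ℝ) : EReal) := by exact_mod_cast (by linarith : (0:ℝ) ≤ 1 - t)
  have h0' : (0:EReal) ≤ ((t : ℝ) : EReal) := by exact_mod_cast h0
  push_cast at h1'
  exact add_le_add (mul_le_mul_of_nonneg_left ha h1') (mul_le_mul_of_nonneg_left hb h0')

open Classical in
lemma goodQ_of {P : Set (Euc 2)} (hP : IsClosed P) (hconv : Convex ℝ P) {q : Euc 2 → EReal}
    (hl : LowerSemicontinuousOn q P) (nb : ∀ x ∈ P, q x ≠ ⊥) (hc : EConvexOn P q) :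
    GoodQ P (fun x => if x ∈ P then q x else ⊤) where
  lsc := by
    intro x c hx
    by_cases h : x ∈ P
    · simp only [h, if_true] at hx
      have := hl x h c hx
      rw [eventually_nhdsWithin_iff] at this
      filter_upwards [this] with y hy
      by_cases h' : y ∈ P
      · simp [h', hy h']
      · simp only [h', if_false]; exact lt_top_of_lt hx
    · simp only [h, if_false] at hx
      filter_upwards [hP.isOpen_compl.mem_nhds h] with y hy
      simp only [show y ∉ P from hy, if_false]; exact hx
  nb := by
    intro x
    by_cases h : x ∈ P
    · simp [h, nb x h]
    · simp [h]
  off := by intro x h; simp [h]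
  epi := by
    intro x y a b t h0 h1 hx hy
    by_cases h : x ∈ P
    · by_cases h' : y ∈ P
      · simp only [h, h', if_true] at hx hy
        have : (1 - t) • x + t • y ∈ P := hconv h h' (by linarith) h0 (by ring)
        simp only [this, if_true]
        exact epi_of_econv hc x h y h' a b t h0 h1 hx hy
      · simp [h'] at hy
    · simp [h] at hx

/-- key slope lemma -/
lemma GoodQ.slope {P Q} (h : GoodQ P Q) {w : Euc 2} {N s t a b : ℝ} {x : Euc 2}
    (hs : 0 ≤ s) (ht : 0 ≤ t) (ha : Q (x + t • w) = (a : EReal))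
    (hlt : ((a + N * t : ℝ) : EReal) < Q x) (hb : Q (x - s • w) ≤ (b : EReal)) :
    ∃ z : ℝ, Q x = (z : EReal) ∧ z + s * N ≤ b ∧ a + N * t < z := by
  have htp : 0 < t := by
    rcases ht.eq_or_lt with rfl | h
    · simp only [zero_smul, add_zero, mul_zero] at ha hlt; rw [ha] at hlt; exact absurd hlt (lt_irrefl _)
    · exact h
  have hst : 0 < s + t := by linarith
  have key := h.epi _ _ _ _ (s / (s + t)) (by positivity) (by rw [div_le_one hst]; linarith)
    hb ha.le
  have e : (1 - s / (s + t)) • (x - s • w) + (s / (s + t)) • (x + t • w) = x := by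
    have h1 : 1 - s / (s + t) = t / (s + t) := by field_simp; ring
    have h2 : t / (s+t) + s/(s+t) = 1 := by field_simp; ring
    have h3 : (s/(s+t)) * t - (t/(s+t)) * s = 0 := by field_simp; ring
    rw [h1]
    calc _ = (t / (s+t) + s/(s+t)) • x + ((s/(s+t)) * t - (t/(s+t)) * s) • w := by module
      _ = x := by rw [h2, h3]; simp
  rw [e] at key
  have nb := h.nb x
  generalize Q x = A at *
  induction A using EReal.rec with
  | bot => simp at nb
  | top => exact absurd (top_le_iff.1 key) (EReal.coe_ne_top _)
  | coe z =>
    refine ⟨z, rfl, ?_, by exact_mod_cast hlt⟩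
    have k : z ≤ (1 - s / (s + t)) * b + s / (s + t) * a := by exact_mod_cast key
    have l : a + N * t < z := by exact_mod_cast hlt
    have k2 : z * (s + t) ≤ t * b + s * a := by
      have : t * b + s * a = ((1 - s / (s + t)) * b + s / (s + t) * a) * (s + t) := by
        field_simp; ring
      rw [this]; exact mul_le_mul_of_nonneg_right k hst.le
    have : t * (z + s * N) ≤ t * b := by nlinarith
    exact le_of_mul_le_mul_left this htp

lemma GoodQ.attain' {P Q} (h : GoodQ P Q) (w : Euc 2) {R : ℝ} (hR : 0 ≤ R) (N : ℝ) (x : Euc 2)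
    (hx : qreg Q w R N x < Q x) :
    ∃ t a : ℝ, 0 ≤ t ∧ Q (x + t • w) = (a : EReal) ∧ qreg Q w R N x = ((a + N * t : ℝ) : EReal) := by
  obtain ⟨t, ht, e⟩ := h.attain w hR N x
  have nb := h.nb (x + t • w)
  generalize hA : Q (x + t • w) = A at *
  induction A using EReal.rec with
  | bot => simp at nb
  | top => rw [e, EReal.top_add_coe] at hx; exact absurd hx not_top_lt
  | coe a => exact ⟨t, a, ht.1, hA, by rw [e]; push_cast; rfl⟩

lemma GoodQ.propA {P Q} (h : GoodQ P Q) {w : Euc 2} {R N : ℝ} (hR : 0 ≤ R) (hN : 0 ≤ N)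
    (hRP : ∀ x ∈ P, ∀ t : ℝ, 0 ≤ t → x + t • w ∈ P → t ≤ R)
    {x : Euc 2} {s : ℝ} (hs : 0 ≤ s) (hy : x - s • w ∈ P) :
    expE (Q x) - expE (qreg Q w R N x) ≤
      expE (Q (x - s • w)) - expE (qreg Q w R N (x - s • w)) := by
  by_cases hx : qreg Q w R N x < Q x
  swap
  · rw [tsub_eq_zero_of_le (expE_mono (not_lt.1 hx))]; simp
  obtain ⟨t, a, ht, ha, e⟩ := h.attain' w hR N x hx
  have hmem : x + t • w ∈ P := by
    by_contra hn
    rw [h.off _ hn] at ha; simp at ha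
  have e2 : x - s • w + (s + t) • w = x + t • w := by module
  have hyr : qreg Q w R N (x - s • w) ≤ ((a + N * (s + t) : ℝ) : EReal) := by
    refine (iInf₂_le (s + t) ⟨by linarith, hRP _ hy _ (by linarith) (by rw [e2]; exact hmem)⟩).trans ?_
    rw [e2, ha]; push_cast; rfl
  have nb := h.nb (x - s • w)
  have hyr' := expE_mono hyr
  rw [expE_coe] at hyr'
  generalize hB : Q (x - s • w) = B at *
  induction B using EReal.rec with
  | bot => simp at nb
  | top =>
    rw [expE_top, ENNReal.top_sub (ne_top_of_le_ne_top ENNReal.ofReal_ne_top hyr')]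
    simp
  | coe b =>
    obtain ⟨z, hz, h1, h2⟩ := h.slope hs ht ha (by rw [← e]; exact hx) hB.le
    rw [hz, e, expE_coe, expE_coe, expE_coe]
    refine le_trans ?_ (tsub_le_tsub_left hyr' _)
    rw [← ENNReal.ofReal_sub _ (Real.exp_pos _).le, ← ENNReal.ofReal_sub _ (Real.exp_pos _).le]
    apply ENNReal.ofReal_le_ofReal
    have e1 : Real.exp (z + s * N) ≤ Real.exp b := Real.exp_le_exp.2 h1
    have e3 : Real.exp (a + N * (s + t)) = Real.exp (a + N * t) * Real.exp (s * N) := by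
      rw [← Real.exp_add]; congr 1; ring
    rw [Real.exp_add] at e1
    have e4 : Real.exp (a + N * t) ≤ Real.exp z := Real.exp_le_exp.2 h2.le
    have e5 : 1 ≤ Real.exp (s * N) := Real.one_le_exp (by positivity)
    rw [e3]
    nlinarith

lemma GoodQ.propB {P Q} (h : GoodQ P Q) {w : Euc 2} {R N m C η : ℝ} (hR : 0 ≤ R)
    (hη : 0 < η) (hm : ∀ x, (m : EReal) ≤ Q x) (hN : C < m + η * N) {x : Euc 2}
    (hC : Q (x - η • w) ≤ (C : EReal)) :
    expE (Q x) - expE (qreg Q w R N x) = 0 := by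
  apply tsub_eq_zero_of_le
  apply expE_mono
  by_contra hx
  push Not at hx
  obtain ⟨t, a, ht, ha, e⟩ := h.attain' w hR N x hx
  obtain ⟨z, hz, h1, h2⟩ := h.slope hη.le ht ha (by rw [← e]; exact hx) hC
  have := hm x
  rw [hz] at this
  have : m ≤ z := by exact_mod_cast this
  linarith

lemma aff_add (ℓ : Euc 2 →ᵃ[ℝ] ℝ) (x y : Euc 2) (t : ℝ) :
    ℓ (x + t • y) = ℓ x + t * ℓ.linear y := by
  have := ℓ.map_vadd x (t • y)
  simp only [vadd_eq_add, map_smul, smul_eq_mul] at this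
  rw [add_comm x, this, add_comm]

lemma aff_cont (ℓ : Euc 2 →ᵃ[ℝ] ℝ) : Continuous ℓ := ℓ.continuous_of_finiteDimensional

lemma poly_closed {m : ℕ} (L : Fin m → (Euc 2 →ᵃ[ℝ] ℝ)) : IsClosed (⋂ k, {x | 0 ≤ L k x}) :=
  isClosed_iInter fun k => isClosed_le continuous_const (aff_cont (L k))

lemma poly_convex {m : ℕ} (L : Fin m → (Euc 2 →ᵃ[ℝ] ℝ)) : Convex ℝ (⋂ k, {x | 0 ≤ L k x}) := by
  refine convex_iInter fun k => ?_
  exact (convex_Ici (0:ℝ)).affine_preimage (L k)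

lemma poly_interior {m : ℕ} (L : Fin m → (Euc 2 →ᵃ[ℝ] ℝ)) {x : Euc 2} (hx : ∀ k, 0 < L k x) :
    x ∈ interior (⋂ k, {x | 0 ≤ L k x}) := by
  rw [mem_interior]
  refine ⟨⋂ k, {x | 0 < L k x}, Set.iInter_mono fun k y (hy : 0 < L k y) => (hy.le : 0 ≤ L k y),
    isOpen_iInter_of_finite fun k => isOpen_lt continuous_const (aff_cont (L k)), by simpa using hx⟩

lemma generic_dir {m : ℕ} (L : Fin m → (Euc 2 →ᵃ[ℝ] ℝ)) {P : Set (Euc 2)}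
    (hi : (interior P).Nonempty) (v : Euc 2) :
    ∃ w : Euc 2, v + w ∈ interior P ∧ w ≠ 0 ∧ ∀ k, (L k).linear w = 0 → (L k).linear = 0 := by
  have hae : ∀ᵐ w : Euc 2, w ≠ 0 ∧ ∀ k, (L k).linear w = 0 → (L k).linear = 0 := by
    refine Filter.Eventually.and ?_ (ae_all_iff.2 fun k => ?_)
    · simp [ae_iff]
    · by_cases hk : (L k).linear = 0
      · simp [hk]
      · have := Measure.addHaar_submodule (volume : Measure (Euc 2)) (LinearMap.ker (L k).linear)
          (fun h => hk (LinearMap.ker_eq_top.1 h))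
        rw [ae_iff]
        refine measure_mono_null ?_ this
        intro w hw
        simp only [Set.mem_ofPred_eq, Classical.not_imp] at hw
        exact hw.1
  have hd := Measure.dense_of_ae hae
  obtain ⟨p, hp⟩ := hi
  obtain ⟨w, h1, h2⟩ := hd.exists_mem_open (U := (fun w => v + w) ⁻¹' interior P)
    (isOpen_interior.preimage (by fun_prop)) ⟨p - v, by simpa using hp⟩
  exact ⟨w, h2, h1⟩

lemma mid_interior {m : ℕ} {L : Fin m → (Euc 2 →ᵃ[ℝ] ℝ)} (hL : ∀ k, L k ≠ 0) {w x : Euc 2}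
    (hw : ∀ k, (L k).linear w = 0 → (L k).linear = 0) {η : ℝ} (hη : 0 < η)
    (h1 : x + η • w ∈ ⋂ k, {x | 0 ≤ L k x}) (h2 : x - η • w ∈ ⋂ k, {x | 0 ≤ L k x}) :
    x ∈ interior (⋂ k, {x | 0 ≤ L k x}) := by
  apply poly_interior
  intro k
  simp only [Set.mem_iInter, Set.mem_ofPred_eq] at h1 h2
  have a1 := h1 k
  have a2 := h2 k
  rw [aff_add] at a1
  rw [sub_eq_add_neg, ← neg_smul, aff_add] at a2
  by_contra hn
  push Not at hn
  have e0 : L k x = 0 := by linarith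
  have e1 : η * (L k).linear w = 0 := by linarith
  have e2 := hw k ((mul_eq_zero.1 e1).resolve_left hη.ne')
  apply hL k
  ext y
  have := aff_add (L k) x (y - x) 1
  simpa [e2, e0] using this

lemma ray_bdd {P : Set (Euc 2)} (hP : IsCompact P) {w : Euc 2} (hw : w ≠ 0) :
    ∃ R : ℝ, 0 ≤ R ∧ ∀ x ∈ P, ∀ t : ℝ, x + t • w ∈ P → t ≤ R := by
  obtain ⟨D, hD⟩ := hP.isBounded.exists_norm_le
  have hn : 0 < ‖w‖ := norm_pos_iff.2 hw
  refine ⟨max 0 ((D + D) / ‖w‖), le_max_left _ _, fun x hx t ht => ?_⟩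
  apply le_max_of_le_right
  rw [le_div_iff₀ hn]
  have : ‖t • w‖ ≤ D + D := by
    have e : t • w = (x + t • w) - x := by abel
    rw [e]
    exact (norm_sub_le _ _).trans (add_le_add (hD _ ht) (hD _ hx))
  rw [norm_smul, Real.norm_eq_abs] at this
  exact (mul_le_mul_of_nonneg_right (le_abs_self t) hn.le).trans this

/-- entry boundary -/
def entry {m : ℕ} (L : Fin m → (Euc 2 →ᵃ[ℝ] ℝ)) (w : Euc 2) : Set (Euc 2) :=
  ⋃ k, {x | x ∈ (⋂ k, {x | 0 ≤ L k x}) ∧ L k x = 0 ∧ 0 < (L k).linear w}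

lemma entry_closed {m : ℕ} (L : Fin m → (Euc 2 →ᵃ[ℝ] ℝ)) (w : Euc 2) : IsClosed (entry L w) := by
  apply isClosed_iUnion_of_finite
  intro k
  by_cases h : 0 < (L k).linear w
  · simp only [h, and_true]
    exact (poly_closed L).inter (isClosed_eq (aff_cont (L k)) continuous_const)
  · simp [h]

lemma entry_frontier {m : ℕ} (L : Fin m → (Euc 2 →ᵃ[ℝ] ℝ)) (w : Euc 2) :
    entry L w ⊆ frontier (⋂ k, {x | 0 ≤ L k x}) := by
  intro x hx
  obtain ⟨k, hx, h0, hp⟩ := Set.mem_iUnion.1 hx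
  rw [(poly_closed L).frontier_eq]
  refine ⟨hx, fun hi => ?_⟩
  have hc : ContinuousAt (fun t : ℝ => x + t • (-w)) 0 := by fun_prop
  have := hc.eventually (by simpa using (isOpen_interior.mem_nhds hi) :
    ∀ᶠ y in 𝓝 (x + (0:ℝ) • (-w)), y ∈ interior (⋂ k, {x | 0 ≤ L k x}))
  obtain ⟨ε, hε, h⟩ := Metric.eventually_nhds_iff.1 this
  have h1 := interior_subset (h (y := ε / 2) (by simp [abs_of_pos hε, hε]))
  simp only [Set.mem_iInter, Set.mem_ofPred_eq] at h1
  have h2 := h1 k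
  rw [aff_add, h0] at h2
  simp at h2
  nlinarith

lemma entry_exists {m : ℕ} (L : Fin m → (Euc 2 →ᵃ[ℝ] ℝ)) {w : Euc 2} (hw : w ≠ 0)
    (hP : IsCompact (⋂ k, {x | 0 ≤ L k x})) {x : Euc 2} (hx : x ∈ ⋂ k, {x | 0 ≤ L k x}) :
    ∃ s : ℝ, 0 ≤ s ∧ x - s • w ∈ entry L w := by
  obtain ⟨R, hR, hb⟩ := ray_bdd hP (neg_ne_zero.2 hw)
  have hc : IsCompact (Set.Icc 0 R ∩ (fun s : ℝ => x - s • w) ⁻¹' (⋂ k, {x | 0 ≤ L k x})) :=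
    isCompact_Icc.inter_right ((poly_closed L).preimage (by fun_prop))
  obtain ⟨s, ⟨⟨hs0, hsR⟩, hsP⟩, hmax⟩ := hc.exists_isMaxOn (f := fun s => s)
    ⟨0, by simpa [hR] using hx⟩ continuousOn_id
  refine ⟨s, hs0, ?_⟩
  by_contra hn
  simp only [entry, Set.mem_iUnion, not_exists, Set.mem_ofPred_eq, not_and] at hn
  have hev : ∀ᶠ ε in 𝓝[>] (0:ℝ), ∀ k, 0 ≤ L k (x - s • w + ε • (-w)) := by
    rw [Filter.eventually_all]
    intro k
    have h0 : 0 ≤ L k (x - s • w) := by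
      have := Set.mem_iInter.1 hsP k
      exact this
    rcases h0.eq_or_lt with h0 | h0
    · have := hn k hsP h0.symm
      filter_upwards [self_mem_nhdsWithin] with ε (hε : 0 < ε)
      rw [aff_add, ← h0]
      simp only [map_neg]
      nlinarith
    · have hc : ContinuousAt (fun ε : ℝ => L k (x - s • w + ε • (-w))) 0 := by
        have := aff_cont (L k)
        fun_prop
      have := hc.eventually (lt_mem_nhds (a := 0) (by simpa using h0))
      exact (this.filter_mono nhdsWithin_le_nhds).mono fun _ h => le_of_lt h
  obtain ⟨ε, h1, h2⟩ := (hev.and self_mem_nhdsWithin).exists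
  have h2 : 0 < ε := h2
  have hmem : x - (s + ε) • w ∈ ⋂ k, {x | 0 ≤ L k x} := by
    have e : x - (s + ε) • w = x - s • w + ε • (-w) := by module
    rw [e]; simpa using h1
  have hle : s + ε ≤ R := by
    apply hb x hx
    have e : x + (s + ε) • (-w) = x - (s + ε) • w := by module
    rw [e]; exact hmem
  have : s + ε ≤ s := hmax (show s + ε ∈ _ from ⟨⟨by linarith, hle⟩, hmem⟩)
  linarith

lemma coords {w : Euc 2} (hw : w ≠ 0) : ∃ (T : Euc 2 →L[ℝ] ℝ) (Φ : (ℝ × ℝ) ≃L[ℝ] Euc 2),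
    (∀ x, T x = 0 → ∃ s : ℝ, x = s • w) ∧ (∀ t s, T (Φ (t, s)) = t) ∧
    ∀ t s r, Φ (t, s + r) = Φ (t, s) + r • w := by
  have hn : w 0 ^ 2 + w 1 ^ 2 ≠ 0 := by
    intro h
    apply hw
    have h0 : w 0 = 0 := by nlinarith [sq_nonneg (w 0), sq_nonneg (w 1)]
    have h1 : w 1 = 0 := by nlinarith [sq_nonneg (w 0), sq_nonneg (w 1)]
    ext i; fin_cases i <;> simp [h0, h1]
  set D := w 0 ^ 2 + w 1 ^ 2 with hD
  let T : Euc 2 →ₗ[ℝ] ℝ :=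
    { toFun := fun x => w 1 * x 0 - w 0 * x 1
      map_add' := by intro x y; simp; ring
      map_smul' := by intro c x; simp; ring }
  let Φ : (ℝ × ℝ) ≃ₗ[ℝ] Euc 2 :=
    { toFun := fun p => !₂[p.1 * w 1 / D + p.2 * w 0, - p.1 * w 0 / D + p.2 * w 1]
      invFun := fun x => (w 1 * x 0 - w 0 * x 1, (w 0 * x 0 + w 1 * x 1) / D)
      map_add' := by intro x y; ext i; fin_cases i <;> simp <;> ring
      map_smul' := by intro c x; ext i; fin_cases i <;> simp <;> ring
      left_inv := by
        intro p
        ext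
        · simp; field_simp; rw [hD]; ring
        · simp; field_simp; rw [hD]; ring
      right_inv := by
        intro x
        ext i; fin_cases i
        · simp; field_simp; rw [hD]; ring
        · simp; field_simp; rw [hD]; ring }
  refine ⟨LinearMap.toContinuousLinearMap T, Φ.toContinuousLinearEquiv, ?_, ?_, ?_⟩
  · intro x hx
    have hx : w 1 * x 0 - w 0 * x 1 = 0 := hx
    refine ⟨(w 0 * x 0 + w 1 * x 1) / D, ?_⟩
    ext i; fin_cases i
    · simp; field_simp; rw [hD]; linear_combination w 1 * hx
    · simp; field_simp; rw [hD]; linear_combination - w 0 * hx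
  · intro t s
    exact congrArg Prod.fst (Φ.left_inv (t, s))
  · intro t s r
    change Φ (t, s + r) = Φ (t, s) + r • w
    ext i; fin_cases i <;> simp [Φ] <;> ring

lemma geom {m : ℕ} (L : Fin m → (Euc 2 →ᵃ[ℝ] ℝ)) {w : Euc 2} (hw : w ≠ 0)
    (hP : IsCompact (⋂ k, {x | 0 ≤ L k x})) :
    ∃ C : ℝ≥0∞, C ≠ ⊤ ∧ ∀ η : ℝ, 0 < η → ∀ h : Euc 2 → ℝ≥0∞,
      (∀ x ∈ (⋂ k, {x | 0 ≤ L k x}), ∀ s : ℝ, 0 ≤ s → x - s • w ∈ (⋂ k, {x | 0 ≤ L k x}) →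
        h x ≤ h (x - s • w)) →
      (∀ x ∈ (⋂ k, {x | 0 ≤ L k x}), x - (2 * η) • w ∈ (⋂ k, {x | 0 ≤ L k x}) → h x = 0) →
      ∫⁻ x in (⋂ k, {x | 0 ≤ L k x}), h x ≤
        C * ENNReal.ofReal η *
          ∫⁻ x in frontier (⋂ k, {x | 0 ≤ L k x}), h x ∂(Measure.hausdorffMeasure 1) := by
  obtain ⟨T, Φ, hT, hTΦ, hΦ⟩ := coords hw
  set P := (⋂ k, {x | 0 ≤ L k x}) with hPdef
  have hcl : IsClosed P := poly_closed L
  have hconv : Convex ℝ P := poly_convex L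
  have := Φ.isAddHaarMeasure_map (volume : Measure (ℝ × ℝ))
  obtain ⟨c, hc, hvol⟩ : ∃ c : ℝ≥0∞, c ≠ ⊤ ∧
      (volume : Measure (Euc 2)) = c • Measure.map Φ (volume : Measure (ℝ × ℝ)) :=
    ⟨_, ENNReal.coe_ne_top, Measure.isAddLeftInvariant_eq_smul _ _⟩
  set K := ‖T‖₊
  have hlip : LipschitzWith K T := T.lipschitz
  -- measure comparison
  have hmeas : (volume : Measure ℝ).restrict (T '' P) ≤
      (K : ℝ≥0∞) • Measure.map T ((Measure.hausdorffMeasure 1).restrict (entry L w)) := by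
    refine Measure.le_iff.2 fun A hA => ?_
    rw [Measure.restrict_apply hA, Measure.smul_apply, Measure.map_apply T.continuous.measurable hA,
      Measure.restrict_apply (T.continuous.measurable hA), smul_eq_mul]
    have hsub : A ∩ T '' P ⊆ T '' (T ⁻¹' A ∩ entry L w) := by
      rintro _ ⟨hA, x, hx, rfl⟩
      obtain ⟨s, hs, he⟩ := entry_exists L hw hP hx
      have hTw : T w = 0 := by
        have h1 := hΦ 0 0 1
        have h2 := congrArg T h1
        rw [hTΦ, map_add, hTΦ] at h2
        simpa using h2.symm
      have e : T (x - s • w) = T x := by simp [hTw]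
      exact ⟨x - s • w, ⟨by rw [Set.mem_preimage, e]; exact hA, he⟩, e⟩
    refine (measure_mono hsub).trans ?_
    rw [← hausdorffMeasure_real]
    simpa using hlip.hausdorffMeasure_image_le (d := 1) zero_le_one (T ⁻¹' A ∩ entry L w)
  refine ⟨c * 2 * K, by finiteness, fun η hη h hA hB => ?_⟩
  set g : ℝ → ℝ≥0∞ := fun t => ⨆ x ∈ P ∩ T ⁻¹' {t}, h x with hg
  -- boundary integral
  have hgB : ∀ y ∈ entry L w, g (T y) ≤ h y := by
    intro y hy
    refine iSup₂_le fun x hx => ?_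
    obtain ⟨hxP, hxT⟩ := hx
    have hxT : T x = T y := hxT
    obtain ⟨s, hs⟩ := hT (x - y) (by rw [map_sub, hxT, sub_self])
    obtain ⟨k, hyP, h0, hp⟩ := Set.mem_iUnion.1 hy
    have hxe : x = y + s • w := by rw [← hs]; abel
    have hk : 0 ≤ L k x := by
      have := Set.mem_iInter.1 hxP k
      exact this
    rw [hxe, aff_add, h0, zero_add] at hk
    have hs0 : 0 ≤ s := nonneg_of_mul_nonneg_left hk hp
    have e : y = x - s • w := by rw [hxe]; abel
    rw [e]
    apply hA x hxP s hs0
    rw [← e]; exact hyP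
  have hbd : ∫⁻ t in T '' P, g t ≤ K * ∫⁻ x in frontier P, h x ∂(Measure.hausdorffMeasure 1) := by
    obtain ⟨g0, g0m, g0le, g0e⟩ := exists_measurable_le_lintegral_eq
      ((volume : Measure ℝ).restrict (T '' P)) g
    rw [g0e]
    calc _ ≤ ∫⁻ t, g0 t ∂((K : ℝ≥0∞) • Measure.map T ((Measure.hausdorffMeasure 1).restrict (entry L w))) :=
          lintegral_mono' hmeas le_rfl
      _ = K * ∫⁻ x in entry L w, g0 (T x) ∂(Measure.hausdorffMeasure 1) := by
          rw [lintegral_smul_measure, lintegral_map g0m T.continuous.measurable, smul_eq_mul]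
      _ ≤ K * ∫⁻ x in entry L w, h x ∂(Measure.hausdorffMeasure 1) := by
          gcongr 1
          refine setLIntegral_mono' (entry_closed L w).measurableSet fun x hx => ?_
          exact (g0le _).trans (hgB x hx)
      _ ≤ _ := by
          gcongr 1
          exact lintegral_mono_set (entry_frontier L w)
  -- interior integral
  have hin : ∫⁻ x in P, h x ≤ c * ∫⁻ t in T '' P, ENNReal.ofReal (2 * η) * g t := by
    rw [← lintegral_indicator hcl.measurableSet]
    obtain ⟨h0, h0m, h0le, h0e⟩ := exists_measurable_le_lintegral_eq
      (volume : Measure (Euc 2)) (P.indicator h)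
    rw [h0e, hvol, lintegral_smul_measure, lintegral_map h0m Φ.continuous.measurable, smul_eq_mul]
    gcongr 1
    rw [Measure.volume_eq_prod, lintegral_prod (fun z => h0 (Φ z)) (h0m.comp Φ.continuous.measurable).aemeasurable]
    rw [← lintegral_indicator (hP.image T.continuous).measurableSet]
    refine lintegral_mono fun t => ?_
    have hle : ∀ s, h0 (Φ (t, s)) ≤ P.indicator h (Φ (t, s)) := fun s => h0le _
    by_cases ht : t ∈ T '' P
    · rw [Set.indicator_of_mem ht]
      set A := {s : ℝ | Φ (t, s) ∈ P ∧ h (Φ (t, s)) ≠ 0} with hAdef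
      have hdiam : volume A ≤ ENNReal.ofReal (2 * η) := by
        refine (Real.volume_le_diam A).trans (Metric.ediam_le ?_)
        have aux : ∀ s1 ∈ A, ∀ s2 ∈ A, s1 ≤ s2 → s2 - s1 ≤ 2 * η := by
          intro s1 h1 s2 h2 h12
          by_contra hn
          push Not at hn
          apply h2.2
          apply hB _ h2.1
          have hd : 0 < s2 - s1 := by linarith
          have e1 : Φ (t, s1) = Φ (t, s2) - (s2 - s1) • w := by
            have := hΦ t s1 (s2 - s1)
            rw [add_sub_cancel] at this
            rw [this]; abel
          have hm := h1.1
          rw [e1] at hm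
          have hθ := hconv h2.1 hm (a := 1 - 2 * η / (s2 - s1)) (b := 2 * η / (s2 - s1))
            (by rw [sub_nonneg, div_le_one hd]; linarith) (by positivity) (by ring)
          convert hθ using 1
          have h3 : 2 * η / (s2 - s1) * (s2 - s1) = 2 * η := by field_simp
          rw [smul_sub, smul_smul, h3]
          module
        intro s1 h1 s2 h2
        rw [edist_dist, Real.dist_eq]
        apply ENNReal.ofReal_le_ofReal
        rcases le_total s1 s2 with h12 | h12
        · rw [abs_sub_comm, abs_of_nonneg (by linarith)]; exact aux _ h1 _ h2 h12
        · rw [abs_of_nonneg (by linarith)]; exact aux _ h2 _ h1 h12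
      calc ∫⁻ s, h0 (Φ (t, s)) ≤ ∫⁻ s, (toMeasurable volume A).indicator (fun _ => g t) s := by
            refine lintegral_mono fun s => (hle s).trans ?_
            by_cases hs : s ∈ A
            · rw [Set.indicator_of_mem (subset_toMeasurable _ _ hs), Set.indicator_of_mem hs.1]
              exact le_iSup₂ (f := fun x (_ : x ∈ P ∩ T ⁻¹' {t}) => h x) (Φ (t, s)) ⟨hs.1, hTΦ t s⟩
            · by_cases hsP : Φ (t, s) ∈ P
              · have : h (Φ (t, s)) = 0 := by
                  by_contra hne; exact hs ⟨hsP, hne⟩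
                rw [Set.indicator_of_mem hsP, this]; exact zero_le
              · rw [Set.indicator_of_notMem hsP]; exact zero_le
        _ ≤ _ := by
            rw [lintegral_indicator_const (measurableSet_toMeasurable _ _), measure_toMeasurable,
              mul_comm]
            gcongr
    · rw [Set.indicator_of_notMem ht]
      have : ∀ s, h0 (Φ (t, s)) = 0 := by
        intro s
        have hnP : Φ (t, s) ∉ P := fun hP' => ht ⟨_, hP', hTΦ t s⟩
        have := hle s
        rw [Set.indicator_of_notMem hnP] at this
        exact le_antisymm this zero_le
      simp [this]
  refine hin.trans ?_
  rw [lintegral_const_mul' _ _ ENNReal.ofReal_ne_top]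
  calc _ ≤ c * (ENNReal.ofReal (2 * η) *
        (K * ∫⁻ x in frontier P, h x ∂(Measure.hausdorffMeasure 1))) := by gcongr
    _ = _ := by
      rw [ENNReal.ofReal_mul (by norm_num)]
      simp only [ENNReal.ofReal_ofNat]
      ring

lemma dim_eq : (((2 : ℕ) : ℝ) - 1) = 1 := by norm_num

lemma facet_finite {P F : Set (Euc 2)} (hP : IsCompact P) (hF : IsFacetOf P F) :
    (Measure.hausdorffMeasure 1 : Measure (Euc 2)) F < ⊤ := by
  obtain ⟨⟨ℓ, hl, hpos, hFe⟩, hr⟩ := hF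
  have hFP : F ⊆ P := by rw [hFe]; exact fun x hx => hx.1
  have hr1 : Module.finrank ℝ (vectorSpan ℝ F) = 1 := by omega
  obtain ⟨e, he, hsp⟩ := finrank_eq_one_iff'.1 hr1
  rcases F.eq_empty_or_nonempty with h | ⟨p, hp⟩
  · simp [h]
  have he' : (e : Euc 2) ≠ 0 := by simpa using he
  obtain ⟨R, hR, hb⟩ := ray_bdd hP he'
  obtain ⟨R', hR', hb'⟩ := ray_bdd hP (neg_ne_zero.2 he')
  have hsub : F ⊆ (fun t : ℝ => p + t • (e : Euc 2)) '' Set.Icc (-R') R := by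
    intro x hx
    obtain ⟨c, hc⟩ := hsp ⟨x - p, vsub_mem_vectorSpan ℝ hx hp⟩
    have hc' : c • (e : Euc 2) = x - p := congrArg Subtype.val hc
    have hx' : x = p + c • (e : Euc 2) := by rw [hc']; abel
    refine ⟨c, ⟨?_, hb p (hFP hp) c (hx' ▸ hFP hx)⟩, hx'.symm⟩
    have : p + (-c) • (-(e : Euc 2)) = x := by rw [hx']; module
    have := hb' p (hFP hp) (-c) (this ▸ hFP hx)
    linarith
  have hlip : LipschitzWith ‖(e : Euc 2)‖₊ (fun t : ℝ => p + t • (e : Euc 2)) := by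
    apply LipschitzWith.of_dist_le_mul
    intro s t
    rw [dist_eq_norm, dist_eq_norm]
    have : p + s • (e : Euc 2) - (p + t • (e : Euc 2)) = (s - t) • (e : Euc 2) := by module
    rw [this, norm_smul, mul_comm]
    rfl
  refine (measure_mono hsub).trans_lt ((hlip.hausdorffMeasure_image_le zero_le_one _).trans_lt ?_)
  rw [hausdorffMeasure_real, Real.volume_Icc]
  refine ENNReal.mul_lt_top ?_ ENNReal.ofReal_lt_top
  simp

lemma facet_sigma (S : NSystem 2) {F : Set (Euc 2)} (hF : IsFacetOf S.P F) :
    ∃ c : ℝ≥0∞, c ≠ ⊤ ∧ (Measure.hausdorffMeasure 1 : Measure (Euc 2)).restrict F ≤ c • S.σ := by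
  obtain ⟨c, hc, h⟩ := S.flat_bdry F hF
  rw [dim_eq] at h
  have hc0 : ENNReal.ofReal c ≠ 0 := by simpa using hc
  refine ⟨(ENNReal.ofReal c)⁻¹, by simpa using hc, ?_⟩
  have : (Measure.hausdorffMeasure 1 : Measure (Euc 2)).restrict F
      = (ENNReal.ofReal c)⁻¹ • S.σ.restrict F := by
    rw [h, smul_smul, ENNReal.inv_mul_cancel hc0 ENNReal.ofReal_ne_top, one_smul]
  rw [this]
  intro A
  simp only [Measure.smul_apply, smul_eq_mul]
  gcongr
  exact Measure.restrict_le_self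

lemma facet_sigma_apply (S : NSystem 2) {F : Set (Euc 2)} (hF : IsFacetOf S.P F) :
    ∃ c : ℝ≥0∞, c ≠ ⊤ ∧ ∀ A ⊆ F, S.σ A = c * (Measure.hausdorffMeasure 1 : Measure (Euc 2)) A := by
  obtain ⟨c, hc, h⟩ := S.flat_bdry F hF
  rw [dim_eq] at h
  refine ⟨ENNReal.ofReal c, ENNReal.ofReal_ne_top, fun A hA => ?_⟩
  have := congrArg (fun μ : Measure (Euc 2) => μ A) h
  simpa [Measure.restrict_eq_self _ hA] using this

lemma face_cases {P : Set (Euc 2)} {ℓ : Euc 2 →ᵃ[ℝ] ℝ} (hl : ℓ ≠ 0) (hp : ∀ y ∈ P, 0 ≤ ℓ y) :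
    IsFacetOf P {y ∈ P | ℓ y = 0} ∨ ({y ∈ P | ℓ y = 0}).Subsingleton := by
  set F := {y ∈ P | ℓ y = 0} with hF
  rcases F.eq_empty_or_nonempty with he | ⟨p, hpF⟩
  · right; rw [he]; exact Set.subsingleton_empty
  by_cases h1 : Module.finrank ℝ (vectorSpan ℝ F) = 1
  · left; exact ⟨⟨ℓ, hl, hp, hF⟩, by omega⟩
  right
  have hle : vectorSpan ℝ F ≤ LinearMap.ker ℓ.linear := by
    rw [vectorSpan_def, Submodule.span_le]
    rintro _ ⟨x, hx, y, hy, rfl⟩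
    have : ℓ.linear (x -ᵥ y) = ℓ x -ᵥ ℓ y := ℓ.linearMap_vsub x y
    simp only [SetLike.mem_coe, LinearMap.mem_ker]
    rw [this, hx.2, hy.2]; simp
  have hlin : ℓ.linear ≠ 0 := by
    intro h0
    apply hl
    ext y
    have := aff_add ℓ p (y - p) 1
    simpa [h0, hpF.2] using this
  have hlt : Module.finrank ℝ (vectorSpan ℝ F) < 2 := by
    have h2 : Module.finrank ℝ (Euc 2) = 2 := by simp
    refine lt_of_lt_of_eq (Submodule.finrank_lt ?_) h2
    intro ht
    rw [ht, top_le_iff] at hle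
    exact hlin (LinearMap.ker_eq_top.1 hle)
  have h0 : Module.finrank ℝ (vectorSpan ℝ F) = 0 := by omega
  rw [Submodule.finrank_eq_zero] at h0
  intro x hx y hy
  have := vsub_mem_vectorSpan ℝ hx hy
  rw [h0, Submodule.mem_bot, vsub_eq_sub] at this
  exact sub_eq_zero.1 this

lemma frontier_cover {m : ℕ} (L : Fin m → (Euc 2 →ᵃ[ℝ] ℝ)) {P : Set (Euc 2)}
    (hP : P = ⋂ k, {x | 0 ≤ L k x}) : frontier P ⊆ ⋃ k, {y ∈ P | L k y = 0} := by
  intro x hx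
  have hcl : IsClosed P := by rw [hP]; exact poly_closed L
  rw [hcl.frontier_eq] at hx
  by_contra hn
  apply hx.2
  rw [hP]
  apply poly_interior
  intro k
  have h1 : 0 ≤ L k x := by
    have := hx.1
    rw [hP] at this
    exact Set.mem_iInter.1 this k
  refine lt_of_le_of_ne h1 fun h => hn (Set.mem_iUnion.2 ⟨k, hx.1, h.symm⟩)

lemma sigma_lower (S : NSystem 2) {m : ℕ} (L : Fin m → (Euc 2 →ᵃ[ℝ] ℝ)) (hL : ∀ k, L k ≠ 0)
    (hP : S.P = ⋂ k, {x | 0 ≤ L k x}) :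
    ∃ C : ℝ≥0∞, C ≠ ⊤ ∧
      (Measure.hausdorffMeasure 1 : Measure (Euc 2)).restrict (frontier S.P) ≤ C • S.σ := by
  have hpos : ∀ k, ∀ y ∈ S.P, 0 ≤ L k y := by
    intro k y hy
    rw [hP] at hy
    exact Set.mem_iInter.1 hy k
  have : ∀ k, ∃ c : ℝ≥0∞, c ≠ ⊤ ∧ (Measure.hausdorffMeasure 1 : Measure (Euc 2)).restrict
      {y ∈ S.P | L k y = 0} ≤ c • S.σ := by
    intro k
    rcases face_cases (hL k) (hpos k) with h | h
    · exact facet_sigma S h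
    · refine ⟨0, by simp, ?_⟩
      have : (Measure.hausdorffMeasure 1 : Measure (Euc 2)) {y ∈ S.P | L k y = 0} = 0 := by
        have := Measure.nullSingletonClass_hausdorff (Euc 2) (d := 1) one_pos
        exact h.measure_zero _
      rw [Measure.restrict_eq_zero.2 this]; simp
  choose c hc h using this
  refine ⟨∑ k, c k, by simpa using hc, ?_⟩
  refine (Measure.restrict_mono (frontier_cover L hP) le_rfl).trans
    (Measure.restrict_iUnion_le.trans ?_)
  rw [Measure.sum_fintype, Finset.sum_smul]
  exact Finset.sum_le_sum fun k _ => h k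

lemma sigma_finite (S : NSystem 2) {m : ℕ} (L : Fin m → (Euc 2 →ᵃ[ℝ] ℝ)) (hL : ∀ k, L k ≠ 0)
    (hP : S.P = ⋂ k, {x | 0 ≤ L k x}) : S.σ (frontier S.P) < ⊤ := by
  have hpos : ∀ k, ∀ y ∈ S.P, 0 ≤ L k y := by
    intro k y hy
    rw [hP] at hy
    exact Set.mem_iInter.1 hy k
  refine (measure_mono (frontier_cover L hP)).trans_lt ((measure_iUnion_le _).trans_lt ?_)
  rw [tsum_fintype]
  refine ENNReal.sum_lt_top.2 fun k _ => ?_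
  have fac : ∀ F, IsFacetOf S.P F → S.σ F < ⊤ := by
    intro F hF
    obtain ⟨c, hc, h⟩ := facet_sigma_apply S hF
    rw [h F subset_rfl]
    exact ENNReal.mul_lt_top hc.lt_top (facet_finite S.simple.1.1 hF)
  rcases face_cases (hL k) (hpos k) with h | h
  · exact fac _ h
  · rcases h.eq_empty_or_singleton with h | ⟨v, h⟩
    · rw [h]; simp
    · have := S.simple.2 v ⟨L k, hL k, hpos k, h.symm⟩
      obtain ⟨F, hF, hv⟩ := Set.nonempty_of_ncard_ne_zero (by rw [this]; norm_num)
      rw [h]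
      exact (measure_mono (Set.singleton_subset_iff.2 hv)).trans_lt (fac F hF)

lemma GoodQ.interior_finite {P Q} (h : GoodQ P Q) (hint : ∫⁻ x in P, expE (Q x) < ⊤)
    {x : Euc 2} (hx : x ∈ interior P) : Q x ≠ ⊤ := by
  have hm : Measurable fun x => expE (Q x) := expE_mono.measurable.comp h.lsc.measurable
  obtain ⟨r, hr, hb⟩ := Metric.isOpen_iff.1 isOpen_interior x hx
  have h1 : ∀ᵐ y : Euc 2, y ∈ Metric.ball x r → Q y ≠ ⊤ := by
    rw [← ae_restrict_iff' Metric.isOpen_ball.measurableSet]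
    have := ae_lt_top hm hint.ne
    have := ae_restrict_of_ae_restrict_of_subset (hb.trans interior_subset) this
    filter_upwards [this] with y hy hq
    rw [hq, expE_top] at hy
    exact lt_irrefl _ hy
  have h2 : ∀ᵐ y : Euc 2, (x + x - y) ∈ Metric.ball x r → Q (x + x - y) ≠ ⊤ :=
    (Measure.measurePreserving_sub_left (volume : Measure (Euc 2)) (x + x)).quasiMeasurePreserving.ae h1
  have hd := Measure.dense_of_ae (h1.and h2)
  obtain ⟨y, ⟨a1, a2⟩, hy⟩ := hd.exists_mem_open Metric.isOpen_ball
    (⟨x, Metric.mem_ball_self hr⟩ : (Metric.ball x r).Nonempty)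
  have b1 := a1 hy
  have b2 := a2 (by
    rw [mem_ball_iff_norm] at hy ⊢
    have e : x + x - y - x = -(y - x) := by abel
    rw [e, norm_neg]; exact hy)
  obtain ⟨a, ha⟩ : ∃ a : ℝ, Q y = a := ⟨_, (EReal.coe_toReal b1 (h.nb _)).symm⟩
  obtain ⟨b, hb⟩ : ∃ b : ℝ, Q (x + x - y) = b := ⟨_, (EReal.coe_toReal b2 (h.nb _)).symm⟩
  have := h.epi _ _ a b (1/2) (by norm_num) (by norm_num) ha.le hb.le
  have e : (1 - 1/2 : ℝ) • y + (1/2 : ℝ) • (x + x - y) = x := by module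
  rw [e] at this
  exact ne_top_of_le_ne_top (EReal.coe_ne_top _) this

lemma GoodQ.compact_bound {P Q} (h : GoodQ P Q) (hconv : Convex ℝ P)
    (hint : ∫⁻ x in P, expE (Q x) < ⊤) {K : Set (Euc 2)} (hK : IsCompact K)
    (hKP : K ⊆ interior P) : ∃ C : ℝ, ∀ x ∈ K, Q x ≤ (C : EReal) := by
  have hco : ConvexOn ℝ (interior P) (fun x => (Q x).toReal) := by
    refine ⟨hconv.interior, fun x hx y hy a b ha hb hab => ?_⟩
    have e : ∀ z ∈ interior P, Q z = ((Q z).toReal : EReal) := fun z hz =>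
      (EReal.coe_toReal (h.interior_finite hint hz) (h.nb _)).symm
    have hz := hconv.interior hx hy ha hb hab
    have := h.epi x y _ _ b hb (by linarith) (e x hx).le (e y hy).le
    have hab' : 1 - b = a := by linarith
    rw [hab', e _ hz] at this
    exact_mod_cast this
  obtain ⟨C, hC⟩ := hK.exists_bound_of_continuousOn ((hco.continuousOn isOpen_interior).mono hKP)
  refine ⟨C, fun x hx => ?_⟩
  rw [← EReal.coe_toReal (h.interior_finite hint (hKP hx)) (h.nb _)]
  exact_mod_cast (le_abs_self _).trans (hC x hx)

lemma neg_mul_lt {r s : ℝ≥0∞} (h : r < s) :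
    ((-(2 * Real.pi) : ℝ) : EReal) * (s : EReal) < ((-(2 * Real.pi) : ℝ) : EReal) * (r : EReal) := by
  have hp : -(2 * Real.pi) < 0 := by have := Real.pi_pos; linarith
  have er : (r : EReal) = ((r.toReal : ℝ) : EReal) := by
    rw [EReal.coe_ennreal_toReal h.ne_top]
  rw [er, ← EReal.coe_mul]
  by_cases hs : s = ⊤
  · rw [hs, EReal.coe_ennreal_top, EReal.coe_mul_top_of_neg hp]
    exact EReal.bot_lt_coe _
  · have es : (s : EReal) = ((s.toReal : ℝ) : EReal) := by
      rw [EReal.coe_ennreal_toReal hs]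
    rw [es, ← EReal.coe_mul]
    have := (ENNReal.toReal_lt_toReal h.ne_top hs).2 h
    exact_mod_cast mul_lt_mul_of_neg_left this hp

lemma arith {A A' B B' H G κ : ℝ≥0∞} (hA : A ≠ ⊤) (hB : B ≠ ⊤) (hB0 : B ≠ 0) (hB' : B' ≠ ⊤)
    (hB0' : B' ≠ 0) (h : A / B ≤ A' / B') (h1 : A' + H ≤ A) (h2 : B ≤ B' + G) (h3 : G ≤ κ * H)
    (h4 : κ * A < B) : G = 0 := by
  have k1 : A * B' ≤ A' * B := by
    rw [ENNReal.div_le_iff hB0 hB] at h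
    calc A * B' ≤ A' / B' * B * B' := by gcongr
      _ = (A' / B' * B') * B := by ring
      _ = A' * B := by rw [ENNReal.div_mul_cancel hB0' hB']
  have hA' : A' ≠ ⊤ := ne_top_of_le_ne_top hA (le_self_add.trans h1)
  have hH : H ≠ ⊤ := ne_top_of_le_ne_top hA (le_add_self.trans h1)
  have k2 : A' * B + H * B ≤ A' * B + κ * A * H := by
    calc A' * B + H * B = (A' + H) * B := by ring
      _ ≤ A * B := by gcongr
      _ ≤ A * (B' + κ * H) := by gcongr; exact h2.trans (by gcongr)
      _ = A * B' + κ * A * H := by ring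
      _ ≤ _ := by gcongr
  have k3 : H * B ≤ κ * A * H := (ENNReal.add_le_add_iff_left (ENNReal.mul_ne_top hA' hB)).1 k2
  by_cases hH0 : H = 0
  · rw [hH0, mul_zero] at h3; exact le_antisymm h3 zero_le
  · rw [mul_comm] at k3
    exact absurd ((ENNReal.mul_le_mul_iff_left hH0 hH).1 k3) (not_le.2 h4)

lemma exists_eta {X B : ℝ≥0∞} (hX : X ≠ ⊤) (hB : B ≠ 0) :
    ∃ η : ℝ, 0 < η ∧ X * ENNReal.ofReal η < B := by
  have ht : Tendsto (fun η : ℝ => X * ENNReal.ofReal η) (𝓝[>] 0) (𝓝 (X * ENNReal.ofReal 0)) := by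
    apply ENNReal.Tendsto.const_mul _ (Or.inr hX)
    exact (ENNReal.continuous_ofReal.tendsto 0).mono_left nhdsWithin_le_nhds
  rw [ENNReal.ofReal_zero, mul_zero] at ht
  have := ht.eventually (gt_mem_nhds (pos_iff_ne_zero.2 hB))
  obtain ⟨η, h1, h2⟩ := (this.and self_mem_nhdsWithin).exists
  exact ⟨η, h2, h1⟩

lemma zero_mem (S : NSystem 2) : (fun _ => (0 : EReal)) ∈ EExpOne S := by
  refine ⟨continuousOn_const.lowerSemicontinuousOn, fun x _ => by simp, ?_, ?_⟩
  · intro x _ y _ t _ _; simp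
  · obtain ⟨c, hc, h⟩ := S.flat
    have e : expE 0 = 1 := by
      have := expE_coe 0
      simpa using this
    simp only [e, lintegral_one, Measure.restrict_apply MeasurableSet.univ, Set.univ_inter, h,
      Measure.smul_apply, smul_eq_mul]
    refine ENNReal.mul_lt_top ENNReal.ofReal_lt_top ?_
    exact (Measure.restrict_apply_le _ _).trans_lt S.simple.1.1.measure_lt_top

lemma ratio_le {S : NSystem 2} {q q' : Euc 2 → EReal} (h : muNA S q' ≤ muNA S q) :
    (∫⁻ x in frontier S.P, expE (q x) ∂S.σ) / (∫⁻ x in S.P, expE (q x) ∂S.μ) ≤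
    (∫⁻ x in frontier S.P, expE (q' x) ∂S.σ) / (∫⁻ x in S.P, expE (q' x) ∂S.μ) := by
  by_contra hn
  push Not at hn
  exact absurd h (not_le.2 (neg_mul_lt hn))

lemma mu_lint (S : NSystem 2) : ∃ c : ℝ≥0∞, c ≠ ⊤ ∧ c ≠ 0 ∧
    ∀ f : Euc 2 → ℝ≥0∞, ∫⁻ x in S.P, f x ∂S.μ = c * ∫⁻ x in S.P, f x := by
  obtain ⟨c, hc, h⟩ := S.flat
  refine ⟨ENNReal.ofReal c, ENNReal.ofReal_ne_top, by simpa using hc, fun f => ?_⟩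
  rw [h, Measure.restrict_smul, Measure.restrict_restrict_of_subset subset_rfl,
    lintegral_smul_measure, smul_eq_mul]

open Classical in
lemma local_bound (S : NSystem 2) (q : Euc 2 → EReal) (hq : q ∈ EExpOne S)
    (hmax : ∀ q' ∈ EExpOne S, muNA S q' ≤ muNA S q) {v : Euc 2} (hv : v ∈ S.P) :
    ∃ M : ℝ, ∀ᶠ x in 𝓝[S.P] v, q x ≤ (M : EReal) := by
  obtain ⟨hl, hnb, hcx, hint⟩ := hq
  obtain ⟨hcomp, hintP, m, L, hL, hP⟩ := S.simple.1
  have hcl : IsClosed S.P := hcomp.isClosed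
  have hconv : Convex ℝ S.P := by rw [hP]; exact poly_convex L
  obtain ⟨w, hvw, hw, hgen⟩ := generic_dir L hintP v
  obtain ⟨cμ, hcμ, hcμ0, hμ⟩ := mu_lint S
  set Q : Euc 2 → EReal := fun x => if x ∈ S.P then q x else ⊤ with hQ
  have hQq : ∀ x ∈ S.P, Q x = q x := fun x hx => by simp [hQ, hx]
  have G : GoodQ S.P Q := goodQ_of hcl hconv hl hnb hcx
  have hfr : frontier S.P ⊆ S.P := hcl.frontier_subset
  have hfm : MeasurableSet (frontier S.P) := isClosed_frontier.measurableSet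
  have hPm : MeasurableSet S.P := hcl.measurableSet
  have volP : volume S.P ≠ 0 := by
    have := isOpen_interior.measure_pos (volume : Measure (Euc 2)) hintP
    exact (this.trans_le (measure_mono interior_subset)).ne'
  have posB : ∀ q' : Euc 2 → EReal, LowerSemicontinuous q' → (∀ x, q' x ≠ ⊥) →
      ∫⁻ x in S.P, expE (q' x) ∂S.μ ≠ 0 := by
    intro q' hl' hb' h0
    rw [hμ, mul_eq_zero] at h0
    have h0 := h0.resolve_left hcμ0
    rw [lintegral_eq_zero_iff (show Measurable fun x => expE (q' x) from
      expE_mono.measurable.comp hl'.measurable)] at h0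
    have : ∀ᵐ x ∂(volume.restrict S.P), False := by
      filter_upwards [h0] with x hx
      exact (expE_pos (hb' x)).ne' hx
    rw [ae_iff] at this
    simp at this
    exact volP this
  set A := ∫⁻ x in frontier S.P, expE (Q x) ∂S.σ with hAdef
  set B := ∫⁻ x in S.P, expE (Q x) ∂S.μ with hBdef
  have eA : ∫⁻ x in frontier S.P, expE (q x) ∂S.σ = A :=
    setLIntegral_congr_fun hfm fun x hx => by simp only [hQq x (hfr hx)]
  have eB : ∫⁻ x in S.P, expE (q x) ∂S.μ = B :=
    setLIntegral_congr_fun hPm fun x hx => by simp only [hQq x hx]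
  have hB0 : B ≠ 0 := posB Q G.lsc G.nb
  have hBt : B ≠ ⊤ := by rw [← eB]; exact hint.ne
  have hAt : A ≠ ⊤ := by
    intro hA
    have := ratio_le (hmax _ (zero_mem S))
    rw [eA, eB, hA, ENNReal.top_div_of_ne_top hBt, top_le_iff] at this
    have e : expE 0 = 1 := by
      have := expE_coe 0
      simpa using this
    simp only [e, lintegral_one, Measure.restrict_apply MeasurableSet.univ, Set.univ_inter] at this
    refine ENNReal.div_ne_top (sigma_finite S L hL hP).ne ?_ this
    have h0 := posB (fun _ => 0) continuous_const.lowerSemicontinuous (by simp)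
    simpa [e] using h0
  have hintQ : ∫⁻ x in S.P, expE (Q x) < ⊤ := by
    rw [hBdef, hμ] at hBt
    exact (ENNReal.lt_top_of_mul_ne_top_right hBt hcμ0)
  -- constants
  obtain ⟨C1, hC1, hgeom⟩ := geom L hw (hP ▸ hcomp)
  rw [← hP] at hgeom
  obtain ⟨C2, hC2, hsig⟩ := sigma_lower S L hL hP
  obtain ⟨η, hη, hηlt⟩ := exists_eta (X := cμ * C1 * C2 * A) (B := B) (by finiteness) hB0
  obtain ⟨R, hR, hRP⟩ := ray_bdd hcomp hw
  -- lower bound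
  obtain ⟨x0, hx0, hmin⟩ := LowerSemicontinuousOn.exists_isMinOn ⟨v, hv⟩ hcomp
    (G.lsc.lowerSemicontinuousOn S.P)
  obtain ⟨mm, hmm⟩ : ∃ mm : ℝ, ∀ x, (mm : EReal) ≤ Q x := by
    obtain ⟨mm, h1⟩ : ∃ mm : ℝ, (mm : EReal) ≤ Q x0 := by
      obtain ⟨mm, -, h⟩ := EReal.exists_between_coe_real (bot_lt_iff_ne_bot.2 (G.nb x0))
      exact ⟨mm, h.le⟩
    refine ⟨mm, fun x => ?_⟩
    by_cases hx : x ∈ S.P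
    · exact h1.trans (hmin hx)
    · rw [G.off x hx]; exact le_top
  -- the compact set
  have hKc : IsCompact ((fun x : Euc 2 => x + η • w) ⁻¹' S.P ∩ (fun x : Euc 2 => x - η • w) ⁻¹' S.P) := by
    refine IsCompact.inter_right ?_ (hcl.preimage (by fun_prop))
    exact (Homeomorph.addRight (η • w)).isCompact_preimage.2 hcomp
  obtain ⟨C, hC⟩ := G.compact_bound hconv hintQ hKc (fun x hx => by
    have h1 := hx.1
    have h2 := hx.2
    simp only [Set.mem_preimage] at h1 h2
    rw [hP] at h1 h2 ⊢
    exact mid_interior hL hgen hη h1 h2)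
  obtain ⟨N, hN0, hN⟩ : ∃ N : ℝ, 0 ≤ N ∧ C < mm + η * N := by
    refine ⟨max 0 ((C - mm + 1) / η), le_max_left _ _, ?_⟩
    have : C - mm + 1 ≤ η * max 0 ((C - mm + 1) / η) := by
      rw [← div_le_iff₀' hη]; exact le_max_right _ _
    linarith
  set q' := qreg Q w R N with hq'
  have hl' : LowerSemicontinuous q' := G.qreg_lsc w hR N
  have hnb' : ∀ x, q' x ≠ ⊥ := G.qreg_nb w hR N
  have hle' : ∀ x, q' x ≤ Q x := qreg_le w hR N
  have mQ : Measurable fun x => expE (Q x) := expE_mono.measurable.comp G.lsc.measurable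
  have mq' : Measurable fun x => expE (q' x) := expE_mono.measurable.comp hl'.measurable
  set h : Euc 2 → ℝ≥0∞ := fun x => expE (Q x) - expE (q' x) with hh
  have mh : Measurable h := mQ.sub mq'
  have hsum : ∀ x, expE (q' x) + h x = expE (Q x) := fun x =>
    add_tsub_cancel_of_le (expE_mono (hle' x))
  have hB't : ∫⁻ x in S.P, expE (q' x) ∂S.μ ≠ ⊤ :=
    ne_top_of_le_ne_top hBt (lintegral_mono fun x => expE_mono (hle' x))
  have hmem : q' ∈ EExpOne S := by
    refine ⟨hl'.lowerSemicontinuousOn _, fun x _ => hnb' x,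
      econv_of_epi (fun x _ => hnb' x) (fun x _ y _ => G.qreg_epi w hR N x y), hB't.lt_top⟩
  have hrat := ratio_le (hmax q' hmem)
  rw [eA, eB] at hrat
  have hzero : ∫⁻ x in S.P, h x ∂S.μ = 0 := by
    refine arith (H := ∫⁻ x in frontier S.P, h x ∂S.σ)
      (κ := cμ * C1 * C2 * ENNReal.ofReal η) hAt hBt hB0 hB't (posB q' hl' hnb') hrat ?_ ?_ ?_ ?_
    · refine (le_lintegral_add _ _).trans_eq ?_
      simp only [hsum]; rfl
    · rw [← lintegral_add_left mq']
      simp only [hsum]; exact le_rfl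
    · rw [hμ]
      have g1 := hgeom η hη h
        (fun x hx s hs hxs => G.propA hR hN0 (fun x hx t _ ht => hRP x hx t ht) hs hxs)
        (fun x hx hxs => by
          refine G.propB hR hη hmm hN (hC _ ⟨?_, ?_⟩)
          · simpa using hx
          · have e : x - η • w - η • w = x - (2 * η) • w := by module
            simpa only [Set.mem_preimage, e] using hxs)
      have g2 : ∫⁻ x in frontier S.P, h x ∂(Measure.hausdorffMeasure 1) ≤
          C2 * ∫⁻ x in frontier S.P, h x ∂S.σ := by
        have := Measure.restrict_mono (subset_refl (frontier S.P)) hsig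
        rw [Measure.restrict_restrict_of_subset subset_rfl, Measure.restrict_smul] at this
        refine (lintegral_mono' this le_rfl).trans_eq ?_
        rw [lintegral_smul_measure, smul_eq_mul]
      calc cμ * ∫⁻ x in S.P, h x ≤ cμ * (C1 * ENNReal.ofReal η *
            (C2 * ∫⁻ x in frontier S.P, h x ∂S.σ)) := by
            gcongr; exact g1.trans (by gcongr)
        _ = _ := by ring
    · refine lt_of_eq_of_lt ?_ hηlt
      ring
  -- vanishing of h
  have hae : ∀ᵐ x ∂(volume.restrict S.P), h x = 0 := by
    rw [hμ, mul_eq_zero] at hzero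
    exact (lintegral_eq_zero_iff mh).1 (hzero.resolve_left hcμ0)
  -- bound for q' near v
  obtain ⟨r, hr, hrb⟩ := Metric.nhds_basis_closedBall.mem_iff.1 (isOpen_interior.mem_nhds hvw)
  obtain ⟨M0, hM0⟩ := G.compact_bound hconv hintQ (isCompact_closedBall (v + w) r) hrb
  have h1R : (1 : ℝ) ≤ R := hRP v hv 1 (by simpa using interior_subset hvw)
  have hU : ∀ x ∈ Metric.ball v r, q' x ≤ ((M0 + N : ℝ) : EReal) := by
    intro x hx
    refine (iInf₂_le (1:ℝ) ⟨zero_le_one, h1R⟩).trans ?_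
    rw [add_real_le]
    simp only [one_smul, mul_one, add_sub_cancel_right]
    apply hM0
    rw [Metric.mem_closedBall, dist_add_right]
    exact (Metric.mem_ball.1 hx).le
  refine ⟨M0 + N, ?_⟩
  filter_upwards [self_mem_nhdsWithin, mem_nhdsWithin_of_mem_nhds (Metric.ball_mem_nhds v hr)]
    with x hxP hxU
  by_contra hlt
  push Not at hlt
  rw [← hQq x hxP] at hlt
  have hW : {y | ((M0 + N : ℝ) : EReal) < Q y} ∈ 𝓝 x := G.lsc x _ hlt
  obtain ⟨W, hWs, hWo, hxW⟩ := mem_nhds_iff.1 hW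
  have hcli : x ∈ closure (interior S.P) := by
    rw [hconv.closure_interior_eq_closure_of_nonempty_interior hintP]
    exact subset_closure hxP
  have hOo : IsOpen (W ∩ Metric.ball v r) := hWo.inter Metric.isOpen_ball
  have hne : ((W ∩ Metric.ball v r) ∩ interior S.P).Nonempty :=
    mem_closure_iff.1 hcli _ hOo ⟨hxW, hxU⟩
  have hpos := (hOo.inter isOpen_interior).measure_pos (volume : Measure (Euc 2)) hne
  have hnull := ae_restrict_of_ae_restrict_of_subset
    (Set.inter_subset_right.trans interior_subset :
      (W ∩ Metric.ball v r) ∩ interior S.P ⊆ S.P) hae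
  rw [ae_restrict_iff' (hOo.inter isOpen_interior).measurableSet, ae_iff] at hnull
  refine hpos.ne' (measure_mono_null (fun y hy => ?_) hnull)
  simp only [Set.mem_ofPred_eq, Classical.not_imp]
  refine ⟨hy, ?_⟩
  have h1 : ((M0 + N : ℝ) : EReal) < Q y := hWs hy.1.1
  have h2 := hU y hy.1.2
  exact (tsub_pos_of_lt (expE_lt (h2.trans_lt h1))).ne'

/-- For a 2-dimensional system, every maximizer `q ∈ ℰ^{exp,1}(P)` of the toric
non-archimedean μ-entropy `𝜇̌_NA` is bounded and continuous on `P`. -/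
theorem maximizer_of_muNA_bounded_continuous (S : NSystem 2)
    (q : Euc 2 → EReal) (hq : q ∈ EExpOne S)
    (hmax : ∀ q' ∈ EExpOne S, muNA S q' ≤ muNA S q) :
    (∃ m M : ℝ, ∀ x ∈ S.P, (m : EReal) ≤ q x ∧ q x ≤ (M : EReal)) ∧
    ContinuousOn q S.P := by
  obtain ⟨hcomp, hintP, m, L, hL, hP⟩ := S.simple.1
  have hne : S.P.Nonempty := hintP.mono interior_subset
  have hq0 := hq
  obtain ⟨hl, hnb, hcx, hint⟩ := hq
  obtain ⟨M, hM⟩ : ∃ M : ℝ, ∀ x ∈ S.P, q x ≤ (M : EReal) := by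
    refine hcomp.induction_on (p := fun s => ∃ M : ℝ, ∀ x ∈ s, q x ≤ (M : EReal)) ?_ ?_ ?_ ?_
    · exact ⟨0, by simp⟩
    · rintro s t hst ⟨M, h⟩
      exact ⟨M, fun x hx => h x (hst hx)⟩
    · rintro s t ⟨M, h⟩ ⟨M', h'⟩
      refine ⟨max M M', fun x hx => ?_⟩
      rcases hx with hx | hx
      · exact (h x hx).trans (by exact_mod_cast le_max_left _ _)
      · exact (h' x hx).trans (by exact_mod_cast le_max_right _ _)
    · intro v hv
      obtain ⟨M, h⟩ := local_bound S q hq0 hmax hv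
      exact ⟨_, h, M, fun x hx => hx⟩
  refine ⟨?_, ?_⟩
  · obtain ⟨x0, hx0, hmin⟩ := LowerSemicontinuousOn.exists_isMinOn hne hcomp hl
    obtain ⟨mm, -, h1⟩ := EReal.exists_between_coe_real (bot_lt_iff_ne_bot.2 (hnb x0 hx0))
    exact ⟨mm, M, fun x hx => ⟨h1.le.trans (hmin hx), hM x hx⟩⟩
  · intro x0 hx0
    refine continuousWithinAt_iff_lower_upperSemicontinuousWithinAt.2 ⟨hl x0 hx0, ?_⟩
    intro c hc
    have hc : q x0 < c := hc
    obtain ⟨z, hz⟩ : ∃ z : ℝ, q x0 = z := ⟨_, (EReal.coe_toReal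
      (ne_top_of_le_ne_top (EReal.coe_ne_top _) (hM x0 hx0)) (hnb x0 hx0)).symm⟩
    obtain ⟨c', h1, h2⟩ := EReal.exists_between_coe_real hc
    rw [hz] at h1
    have h1 : z < c' := by exact_mod_cast h1
    obtain ⟨θ, hθ0, hθ1, hθ⟩ : ∃ θ : ℝ, 0 < θ ∧ θ ≤ 1 ∧ (1 - θ) * z + θ * M < c' := by
      have hc : ContinuousAt (fun θ : ℝ => (1 - θ) * z + θ * M) 0 := by fun_prop
      have ev := hc.eventually (gt_mem_nhds (show (1 - (0:ℝ)) * z + 0 * M < c' by simpa using h1))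
      have ev1 : ∀ᶠ θ : ℝ in 𝓝 0, θ < 1 := gt_mem_nhds one_pos
      obtain ⟨θ, ⟨a, b⟩, d⟩ :=
        (((ev.and ev1).filter_mono nhdsWithin_le_nhds).and
          (self_mem_nhdsWithin : Set.Ioi (0:ℝ) ∈ 𝓝[>] 0)).exists
      exact ⟨θ, d, b.le, a⟩
    have hev : ∀ᶠ x in 𝓝[S.P] x0, ∀ k, 0 ≤ L k (x0 + θ⁻¹ • (x - x0)) := by
      rw [Filter.eventually_all]
      intro k
      have h0 : ∀ y ∈ S.P, 0 ≤ L k y := by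
        intro y hy
        rw [hP] at hy
        exact Set.mem_iInter.1 hy k
      rcases (h0 x0 hx0).eq_or_lt with e | e
      · filter_upwards [self_mem_nhdsWithin] with x hx
        have a1 := aff_add (L k) x0 (x - x0) θ⁻¹
        have a2 := aff_add (L k) x0 (x - x0) 1
        rw [one_smul, add_sub_cancel, ← e, one_mul, zero_add] at a2
        rw [a1, ← e, ← a2, zero_add]
        exact mul_nonneg (inv_nonneg.2 hθ0.le) (h0 x hx)
      · have hc : ContinuousAt (fun x => L k (x0 + θ⁻¹ • (x - x0))) x0 := by
          have := aff_cont (L k)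
          fun_prop
        have := hc.eventually (lt_mem_nhds (a := 0) (by simpa using e))
        exact (this.filter_mono nhdsWithin_le_nhds).mono fun _ h => le_of_lt h
    filter_upwards [hev] with x hx
    have hy : x0 + θ⁻¹ • (x - x0) ∈ S.P := by
      rw [hP]; exact Set.mem_iInter.2 fun k => hx k
    have := epi_of_econv hcx x0 hx0 _ hy z M θ hθ0.le hθ1 hz.le (hM _ hy)
    have e : (1 - θ) • x0 + θ • (x0 + θ⁻¹ • (x - x0)) = x := by
      rw [smul_add, smul_smul, mul_inv_cancel₀ hθ0.ne', one_smul]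
      module
    rw [e] at this
    refine lt_trans (lt_of_le_of_lt this ?_) h2
    exact_mod_cast hθ

end
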